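/- Let W ∈ 𝒲₀ satisfy ∫_{[0,1]⁴} W(x₁,x₂)(1 − W(x₂,x₃))W(x₃,x₄)(1 − W(x₄,x₁)) dx₁dx₂dx₃dx₄ = 0. Then t(P₃,W) − t(K₂,W) ≥ −1/6, where t(K₂,W) = ∫_{[0,1]²} W(x,y) dx dy and t(P₃,W) = ∫₀¹ (∫₀¹ W(x,y) dy)² dx; equality holds if and only if W is weakly isomorphic to the half-graphon W_h defined by W_h(x,y) = 1 if x + y ≤ 1 and W_h(x,y) = 0 otherwise. -/

import Mathlib

open MeasureTheory
open scoped Classical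

noncomputable section

/-- The unit interval `[0,1]` as a subset of `ℝ`. -/
def I01 : Set ℝ := Set.Icc 0 1

/-- The cube `[0,1]^n`. -/
def cube (n : ℕ) : Set (Fin n → ℝ) := Set.univ.pi fun _ => I01

/-- `W` belongs to `𝒲`: a bounded symmetric measurable function on `[0,1]²`. -/
def memW (W : ℝ → ℝ → ℝ) : Prop :=
  Measurable (Function.uncurry W) ∧
  (∀ x ∈ I01, ∀ y ∈ I01, W x y = W y x) ∧
  ∃ C : ℝ, ∀ x ∈ I01, ∀ y ∈ I01, |W x y| ≤ C

/-- `W` belongs to `𝒲₀`: a graphon, i.e. symmetric measurable with values in `[0,1]`. -/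
def memW0 (W : ℝ → ℝ → ℝ) : Prop :=
  Measurable (Function.uncurry W) ∧
  (∀ x ∈ I01, ∀ y ∈ I01, W x y = W y x) ∧
  ∀ x ∈ I01, ∀ y ∈ I01, W x y ∈ Set.Icc (0 : ℝ) 1

/-- Homomorphism density `t(F,W)` of a finite simple graph `F` in `W`. -/
def homDensity {n : ℕ} (F : SimpleGraph (Fin n)) (W : ℝ → ℝ → ℝ) : ℝ :=
  ∫ x in cube n,
    ∏ p ∈ Finset.univ.filter (fun p : Fin n × Fin n => p.1 < p.2 ∧ F.Adj p.1 p.2),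
      W (x p.1) (x p.2)

/-- Two kernels are weakly isomorphic if all their homomorphism densities agree. -/
def WeaklyIsomorphic (U W : ℝ → ℝ → ℝ) : Prop :=
  ∀ (n : ℕ) (F : SimpleGraph (Fin n)), homDensity F U = homDensity F W

/-- `W` is finitely forcible within the class `A`. -/
def FinitelyForcible (A : (ℝ → ℝ → ℝ) → Prop) (W : ℝ → ℝ → ℝ) : Prop :=
  A W ∧ ∃ (k : ℕ) (n : Fin k → ℕ) (F : ∀ i, SimpleGraph (Fin (n i))),
    ∀ U, A U → (∀ i, homDensity (F i) U = homDensity (F i) W) → WeaklyIsomorphic U W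

/-- Density function `t^k(F,W)` of a `k`-labeled graph, as a function of the
labeled variables; the graph has `k` labeled and `m` unlabeled vertices. -/
def labDensity {k m : ℕ} (F : SimpleGraph (Fin (k + m))) (W : ℝ → ℝ → ℝ)
    (x : Fin k → ℝ) : ℝ :=
  ∫ y in cube m,
    ∏ p ∈ Finset.univ.filter
        (fun p : Fin (k + m) × Fin (k + m) => p.1 < p.2 ∧ F.Adj p.1 p.2),
      W (Fin.append x y p.1) (Fin.append x y p.2)


section Core

open Set

variable {Ω : Type*} [MeasurableSpace Ω] (μ : Measure Ω) [IsProbabilityMeasure μ]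

/-- Lebesgue measure on the unit interval. -/
def lam : Measure ℝ := volume.restrict I01

instance lam_prob : IsProbabilityMeasure lam := by
  constructor
  simp [lam, I01]

theorem int_bdd {Ω : Type*} [MeasurableSpace Ω] (μ : Measure Ω) [IsFiniteMeasure μ] {f : Ω → ℝ} (hf : Measurable f) (C : ℝ) (hC : ∀ x, |f x| ≤ C) :
    Integrable f μ :=
  Integrable.of_bound hf.aestronglyMeasurable C (Filter.Eventually.of_forall hC)

theorem integral_mem01 {f : Ω → ℝ} (hf : Measurable f) (h0 : ∀ x, 0 ≤ f x) (h1 : ∀ x, f x ≤ 1) :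
    0 ≤ ∫ x, f x ∂μ ∧ ∫ x, f x ∂μ ≤ 1 := by
  refine ⟨integral_nonneg h0, ?_⟩
  have : ∫ x, f x ∂μ ≤ ∫ x, (1 : ℝ) ∂μ :=
    integral_mono (int_bdd μ hf 1 fun x => abs_le.2 ⟨by linarith [h0 x], h1 x⟩)
      (integrable_const _) h1
  simpa using this

theorem meas_int {α : Type*} [MeasurableSpace α] {f : α → Ω → ℝ}
    (hf : Measurable (Function.uncurry f)) :
    Measurable fun a => ∫ x, f a x ∂μ :=
  (StronglyMeasurable.integral_prod_right hf.stronglyMeasurable).measurable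

theorem lam_Iio (a : ℝ) (h0 : 0 ≤ a) (h1 : a ≤ 1) :
    ∫ t, (if t < a then (1 : ℝ) else 0) ∂lam = a := by
  have : (fun t : ℝ => if t < a then (1 : ℝ) else 0) = (Iio a).indicator 1 := by
    ext t; simp [indicator]
  rw [this, integral_indicator_one measurableSet_Iio, lam, measureReal_restrict_apply measurableSet_Iio]
  have : Iio a ∩ I01 = Ico 0 a := by
    ext t; simp only [I01, mem_inter_iff, mem_Iio, mem_Icc, mem_Ico]
    constructor
    · rintro ⟨h, h', _⟩; exact ⟨h', h⟩
    · rintro ⟨h, h'⟩; exact ⟨h', h, by linarith⟩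
  rw [this, Real.volume_real_Ico_of_le h0]; simp

theorem lam_int (f : ℝ → ℝ) : ∫ t, f t ∂lam = ∫ t in (0 : ℝ)..1, f t := by
  rw [lam, I01, integral_Icc_eq_integral_Ioc, intervalIntegral.integral_of_le zero_le_one]

theorem lam_Iio_mul (a : ℝ) (h0 : 0 ≤ a) (h1 : a ≤ 1) :
    ∫ t, t * (if t < a then (1 : ℝ) else 0) ∂lam = a ^ 2 / 2 := by
  have : (fun t : ℝ => t * if t < a then (1 : ℝ) else 0) = (Iio a).indicator (fun t => t) := by
    ext t; simp [indicator]
  rw [this, integral_indicator measurableSet_Iio, lam, Measure.restrict_restrict measurableSet_Iio]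
  have : Iio a ∩ I01 = Ico 0 a := by
    ext t; simp only [I01, mem_inter_iff, mem_Iio, mem_Icc, mem_Ico]
    constructor
    · rintro ⟨h, h', _⟩; exact ⟨h', h⟩
    · rintro ⟨h, h'⟩; exact ⟨h', h, by linarith⟩
  rw [this, integral_Ico_eq_integral_Ioo, ← integral_Ioc_eq_integral_Ioo,
    ← intervalIntegral.integral_of_le h0]
  simp

theorem lam_pos (a b : ℝ) (ha0 : 0 ≤ a) (ha1 : a ≤ 1) (hb0 : 0 ≤ b) (_hb1 : b ≤ 1) :
    ∫ t, (if t < a then (1 : ℝ) else 0) * (1 - if t < b then (1 : ℝ) else 0) ∂lam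
      = max (a - b) 0 := by
  have key : ∀ t : ℝ, (if t < a then (1 : ℝ) else 0) * (1 - if t < b then (1 : ℝ) else 0)
      = (if t < a then (1 : ℝ) else 0) - (if t < min a b then (1 : ℝ) else 0) := by
    intro t; simp only [lt_min_iff]; split_ifs <;> simp_all
  have im : ∀ c : ℝ, Integrable (fun t : ℝ => if t < c then (1 : ℝ) else 0) lam := fun c =>
    int_bdd lam (Measurable.ite measurableSet_Iio measurable_const measurable_const) 1
      (fun x => by split_ifs <;> simp)
  simp_rw [key]
  rw [integral_sub (im _) (im _), lam_Iio _ ha0 ha1,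
    lam_Iio _ (le_min ha0 hb0) (min_le_of_left_le ha1)]
  rcases le_total a b with h | h
  · rw [min_eq_left h, max_eq_right (by linarith)]; ring
  · rw [min_eq_right h, max_eq_left (by linarith)]

/-- abstract graphon on a probability space -/
structure Gr (W : Ω → Ω → ℝ) : Prop where
  meas : Measurable (Function.uncurry W)
  symm : ∀ x y, W x y = W y x
  nonneg : ∀ x y, 0 ≤ W x y
  le_one : ∀ x y, W x y ≤ 1

/-- degree -/
def dg (W : Ω → Ω → ℝ) (x : Ω) : ℝ := ∫ y, W x y ∂μ
/-- measure of the difference of two neighbourhoods -/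
def Adf (W : Ω → Ω → ℝ) (y z : Ω) : ℝ := ∫ x, W y x * (1 - W z x) ∂μ
/-- tail distribution of the degree -/
def Gt (W : Ω → Ω → ℝ) (t : ℝ) : ℝ := ∫ y, (if t < dg μ W y then (1 : ℝ) else 0) ∂μ

variable {μ} {W : Ω → Ω → ℝ}


theorem Gr.meas2 (hW : Gr W) {α : Type*} [MeasurableSpace α] {f g : α → Ω} (hf : Measurable f)
    (hg : Measurable g) : Measurable fun a => W (f a) (g a) :=
  hW.meas.comp (hf.prodMk hg)

theorem dg_meas (hW : Gr W) : Measurable (dg μ W) := meas_int μ hW.meas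

theorem dg_mem (hW : Gr W) (x : Ω) : 0 ≤ dg μ W x ∧ dg μ W x ≤ 1 :=
  integral_mem01 μ (hW.meas2 measurable_const measurable_id) (hW.nonneg x) (hW.le_one x)

theorem Wc_mem (hW : Gr W) (x y z : Ω) : 0 ≤ W y x * (1 - W z x) ∧ W y x * (1 - W z x) ≤ 1 :=
  ⟨mul_nonneg (hW.nonneg _ _) (by linarith [hW.le_one z x]),
    mul_le_one₀ (hW.le_one _ _) (by linarith [hW.le_one z x]) (by linarith [hW.nonneg z x])⟩

theorem Wc_meas (hW : Gr W) : Measurable fun p : (Ω × Ω) × Ω => W p.1.1 p.2 * (1 - W p.1.2 p.2) := by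
  have := @Gr.meas2 Ω _ W hW
  exact (this (by fun_prop) (by fun_prop)).mul
    (measurable_const.sub (this (by fun_prop) (by fun_prop)))

theorem Adf_meas (hW : Gr W) : Measurable fun p : Ω × Ω => Adf μ W p.1 p.2 :=
  meas_int μ (f := fun (p : Ω × Ω) x => W p.1 x * (1 - W p.2 x)) (Wc_meas hW)

theorem Wc_meas1 (hW : Gr W) (y z : Ω) : Measurable fun x => W y x * (1 - W z x) :=
  (Wc_meas hW).comp (measurable_const.prodMk measurable_id : Measurable fun x : Ω => ((y, z), x))

theorem Adf_mem (hW : Gr W) (y z : Ω) : 0 ≤ Adf μ W y z ∧ Adf μ W y z ≤ 1 :=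
  integral_mem01 μ (Wc_meas1 hW y z) (fun x => (Wc_mem hW x y z).1) (fun x => (Wc_mem hW x y z).2)

theorem W_int (hW : Gr W) (x : Ω) : Integrable (W x) μ :=
  int_bdd μ (hW.meas2 measurable_const measurable_id) 1
    fun y => abs_le.2 ⟨by linarith [hW.nonneg x y], hW.le_one x y⟩

theorem Wc_int (hW : Gr W) (y z : Ω) : Integrable (fun x => W y x * (1 - W z x)) μ :=
  int_bdd μ (Wc_meas1 hW y z) 1
    fun x => abs_le.2 ⟨by linarith [(Wc_mem hW x y z).1], (Wc_mem hW x y z).2⟩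

theorem Adf_sub (hW : Gr W) (y z : Ω) : Adf μ W y z - Adf μ W z y = dg μ W y - dg μ W z := by
  rw [Adf, Adf, dg, dg, ← integral_sub (Wc_int hW _ _) (Wc_int hW _ _),
    ← integral_sub (W_int hW _) (W_int hW _)]
  congr 1; ext x; ring

theorem Adf_int (hW : Gr W) : Integrable (fun p : Ω × Ω => Adf μ W p.1 p.2) (μ.prod μ) :=
  int_bdd _ (Adf_meas hW) 1
    fun p => abs_le.2 ⟨by linarith [(Adf_mem (μ := μ) hW p.1 p.2).1], (Adf_mem hW p.1 p.2).2⟩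

theorem Adf_ae (hW : Gr W) (hA : ∫ y, ∫ z, Adf μ W y z * Adf μ W z y ∂μ ∂μ = 0) :
    ∀ᵐ p ∂(μ.prod μ), Adf μ W p.1 p.2 = max (dg μ W p.1 - dg μ W p.2) 0 := by
  have hm : Measurable fun p : Ω × Ω => Adf μ W p.1 p.2 * Adf μ W p.2 p.1 :=
    (Adf_meas hW).mul ((Adf_meas hW).comp measurable_swap)
  have h0 : ∀ p : Ω × Ω, 0 ≤ Adf μ W p.1 p.2 * Adf μ W p.2 p.1 := fun p =>
    mul_nonneg (Adf_mem hW _ _).1 (Adf_mem hW _ _).1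
  have hi : Integrable (fun p : Ω × Ω => Adf μ W p.1 p.2 * Adf μ W p.2 p.1) (μ.prod μ) :=
    int_bdd _ hm 1 fun p => abs_le.2 ⟨by linarith [h0 p],
      mul_le_one₀ (Adf_mem hW _ _).2 (Adf_mem hW _ _).1 (Adf_mem hW _ _).2⟩
  have hA' : ∫ p, Adf μ W p.1 p.2 * Adf μ W p.2 p.1 ∂(μ.prod μ) = 0 := by
    rw [integral_prod _ hi]; exact hA
  rw [integral_eq_zero_iff_of_nonneg h0 hi] at hA'
  filter_upwards [hA'] with p hp
  have hs := Adf_sub (μ := μ) hW p.1 p.2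
  have h1 := (Adf_mem (μ := μ) hW p.1 p.2).1
  have h2 := (Adf_mem (μ := μ) hW p.2 p.1).1
  rcases mul_eq_zero.1 hp with h | h
  · rw [max_eq_right (by linarith)]; exact h
  · rw [max_eq_left (by linarith)]; linarith

theorem int_Adf (hW : Gr W) : ∫ p, Adf μ W p.1 p.2 ∂(μ.prod μ) = (∫ x, dg μ W x ∂μ) - ∫ x, dg μ W x ^ 2 ∂μ := by
  have hi : Integrable (fun p : (Ω × Ω) × Ω => W p.1.1 p.2 * (1 - W p.1.2 p.2))
      ((μ.prod μ).prod μ) := int_bdd _ (Wc_meas hW) 1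
    fun p => abs_le.2 ⟨by linarith [(Wc_mem hW p.2 p.1.1 p.1.2).1], (Wc_mem hW p.2 p.1.1 p.1.2).2⟩
  have e1 : ∫ p, Adf μ W p.1 p.2 ∂(μ.prod μ)
      = ∫ x, ∫ p : Ω × Ω, W p.1 x * (1 - W p.2 x) ∂(μ.prod μ) ∂μ :=
    integral_integral_swap (f := fun (p : Ω × Ω) x => W p.1 x * (1 - W p.2 x)) hi
  have e2 : ∀ x, ∫ p : Ω × Ω, W p.1 x * (1 - W p.2 x) ∂(μ.prod μ)
      = dg μ W x - dg μ W x ^ 2 := by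
    intro x
    rw [integral_prod_mul (f := fun y => W y x) (g := fun z => 1 - W z x)]
    simp_rw [hW.symm _ x]
    rw [integral_sub (integrable_const _) (W_int hW x)]
    simp only [dg, integral_const, probReal_univ, smul_eq_mul]; ring
  rw [e1]; simp_rw [e2]
  have hd := dg_meas (μ := μ) hW
  have hdm := dg_mem (μ := μ) hW
  rw [integral_sub (int_bdd μ hd 1 fun x => abs_le.2 ⟨by linarith [hdm x], (hdm x).2⟩)
    (int_bdd μ (hd.pow_const 2) 1 fun x => abs_le.2 ⟨by nlinarith [hdm x], by nlinarith [hdm x]⟩)]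

theorem ind_meas (hW : Gr W) : Measurable fun p : ℝ × Ω => if p.1 < dg μ W p.2 then (1 : ℝ) else 0 :=
  Measurable.ite (measurableSet_lt measurable_fst ((dg_meas hW).comp measurable_snd))
    measurable_const measurable_const

theorem Gt_meas (hW : Gr W) : Measurable (Gt μ W) :=
  meas_int μ (f := fun t y => if t < dg μ W y then (1 : ℝ) else 0) (ind_meas hW)

theorem ind_meas1 (hW : Gr W) (t : ℝ) : Measurable fun y : Ω => if t < dg μ W y then (1 : ℝ) else 0 :=
  Measurable.ite (measurableSet_lt measurable_const (dg_meas hW))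
    measurable_const measurable_const

theorem Gt_mem (hW : Gr W) (t : ℝ) : 0 ≤ Gt μ W t ∧ Gt μ W t ≤ 1 :=
  integral_mem01 μ (ind_meas1 hW t) (fun x => by split_ifs <;> simp)
    (fun x => by split_ifs <;> simp)

theorem int_Gt (hW : Gr W) : ∫ t, Gt μ W t ∂lam = ∫ x, dg μ W x ∂μ := by
  have := integral_integral_swap (f := fun t y => if t < dg μ W y then (1 : ℝ) else 0)
    (μ := lam) (ν := μ)
    (int_bdd _ (ind_meas hW) 1 fun p => by simp only [Function.uncurry]; split_ifs <;> simp)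
  refine this.trans (integral_congr_ae (Filter.Eventually.of_forall fun x => ?_))
  exact lam_Iio _ (dg_mem hW x).1 (dg_mem hW x).2

theorem lam_ae_mem : ∀ᵐ t ∂lam, t ∈ I01 := ae_restrict_mem measurableSet_Icc

theorem int_tGt (hW : Gr W) : ∫ t, t * Gt μ W t ∂lam = (∫ x, dg μ W x ^ 2 ∂μ) / 2 := by
  have := integral_integral_swap (f := fun t y => t * if t < dg μ W y then (1 : ℝ) else 0)
    (μ := lam) (ν := μ) (by
      refine Integrable.of_bound (measurable_fst.mul (ind_meas hW)).aestronglyMeasurable 1 ?_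
      have : ∀ᵐ p ∂(lam.prod μ), p.1 ∈ I01 :=
        Measure.quasiMeasurePreserving_fst.ae (lam_ae_mem)
      filter_upwards [this] with p hp
      simp only [Function.uncurry, I01, mem_Icc, Real.norm_eq_abs] at *
      rw [abs_le]; split_ifs <;> constructor <;> linarith)
  have h2 : ∫ t, t * Gt μ W t ∂lam
      = ∫ t, ∫ y, (t * if t < dg μ W y then (1 : ℝ) else 0) ∂μ ∂lam := by
    congr 1; ext t; rw [Gt, integral_const_mul]
  rw [h2, this, ← integral_div]
  congr 1; ext x
  exact lam_Iio_mul _ (dg_mem hW x).1 (dg_mem hW x).2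

theorem int_GG (hW : Gr W) : ∫ t, Gt μ W t * (1 - Gt μ W t) ∂lam
    = ∫ p, max (dg μ W p.1 - dg μ W p.2) 0 ∂(μ.prod μ) := by
  have hm : Measurable fun q : ℝ × (Ω × Ω) => (if q.1 < dg μ W q.2.1 then (1 : ℝ) else 0) *
      (1 - if q.1 < dg μ W q.2.2 then (1 : ℝ) else 0) := by
    have h1 := (ind_meas (μ := μ) hW).comp
      (by fun_prop : Measurable fun q : ℝ × (Ω × Ω) => (q.1, q.2.1))
    have h2 := (ind_meas (μ := μ) hW).comp
      (by fun_prop : Measurable fun q : ℝ × (Ω × Ω) => (q.1, q.2.2))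
    exact h1.mul (measurable_const.sub h2)
  have := integral_integral_swap (f := fun t (p : Ω × Ω) =>
      (if t < dg μ W p.1 then (1 : ℝ) else 0) * (1 - if t < dg μ W p.2 then (1 : ℝ) else 0))
    (μ := lam) (ν := μ.prod μ)
    (int_bdd _ hm 1 fun p => by simp only [Function.uncurry]; split_ifs <;> simp)
  have h2 : ∫ t, Gt μ W t * (1 - Gt μ W t) ∂lam
      = ∫ t, ∫ p : Ω × Ω, (if t < dg μ W p.1 then (1 : ℝ) else 0) *
        (1 - if t < dg μ W p.2 then (1 : ℝ) else 0) ∂(μ.prod μ) ∂lam := by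
    congr 1; ext t
    rw [integral_prod_mul (f := fun y => if t < dg μ W y then (1 : ℝ) else 0)
      (g := fun y => 1 - if t < dg μ W y then (1 : ℝ) else 0), integral_sub (integrable_const _)]
    · simp [Gt]
    · exact int_bdd μ (ind_meas1 hW t) 1 fun x => by split_ifs <;> simp
  rw [h2, this]
  congr 1; ext p
  exact lam_pos _ _ (dg_mem hW p.1).1 (dg_mem hW p.1).2 (dg_mem hW p.2).1 (dg_mem hW p.2).2

theorem main_id (hW : Gr W) (hA : ∫ y, ∫ z, Adf μ W y z * Adf μ W z y ∂μ ∂μ = 0) :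
    Integrable (fun t => (Gt μ W t - (1 - t)) ^ 2) lam ∧
    ∫ t, (Gt μ W t - (1 - t)) ^ 2 ∂lam
      = 2 * ((∫ x, dg μ W x ^ 2 ∂μ) - ∫ x, dg μ W x ∂μ) + 1 / 3 := by
  have h1 := int_Adf (μ := μ) hW
  rw [integral_congr_ae (Adf_ae hW hA), ← int_GG hW] at h1
  have h2 := int_tGt (μ := μ) hW
  have h3 := int_Gt (μ := μ) hW
  have hG := Gt_mem (μ := μ) hW
  have hGm := Gt_meas (μ := μ) hW
  have i1 : Integrable (fun t => Gt μ W t * (1 - Gt μ W t)) lam :=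
    int_bdd _ (hGm.mul (measurable_const.sub hGm)) 1 fun t =>
      abs_le.2 ⟨by nlinarith [hG t], by nlinarith [hG t]⟩
  have i2 : Integrable (fun t => t * Gt μ W t) lam := by
    refine Integrable.of_bound (measurable_id.mul hGm).aestronglyMeasurable 1 ?_
    filter_upwards [lam_ae_mem] with t ht
    simp only [I01, mem_Icc] at ht
    rw [Real.norm_eq_abs, abs_le]; 
    have hh := hG t
    constructor
    · show -1 ≤ t * Gt μ W t
      nlinarith [mul_nonneg ht.1 hh.1]
    · show t * Gt μ W t ≤ 1
      nlinarith
  have i3 : Integrable (fun t => Gt μ W t) lam := int_bdd _ hGm 1 fun t =>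
      abs_le.2 ⟨by linarith [hG t], by linarith [hG t]⟩
  have i4 : Integrable (fun t : ℝ => (1 - t) ^ 2) lam :=
    ContinuousOn.integrableOn_compact (by rw [I01]; exact isCompact_Icc) (by fun_prop)
  have e : (fun t => (Gt μ W t - (1 - t)) ^ 2) = fun t => 2 * (t * Gt μ W t) +
      (1 - t) ^ 2 - (Gt μ W t * (1 - Gt μ W t) + Gt μ W t) := by
    ext t; ring
  rw [e]
  refine ⟨((i2.const_mul 2).add i4).sub (i1.add i3), ?_⟩
  have s1 := integral_sub ((i2.const_mul 2).add i4) (i1.add i3)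
  simp only [Pi.add_apply] at s1
  rw [s1, integral_add (i2.const_mul 2) i4,
    integral_add i1 i3, integral_const_mul, h1, h2, h3, lam_int]
  have : ∫ t in (0 : ℝ)..1, (1 - t) ^ 2 = 1 / 3 := by
    rw [intervalIntegral.integral_comp_sub_left (fun t => t ^ 2)]; norm_num
  rw [this]; ring

theorem main_ineq (hW : Gr W) (hA : ∫ y, ∫ z, Adf μ W y z * Adf μ W z y ∂μ ∂μ = 0) :
    -(1 / 6) ≤ (∫ x, dg μ W x ^ 2 ∂μ) - ∫ x, dg μ W x ∂μ := by
  have h := (main_id hW hA).2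
  have : 0 ≤ ∫ t, (Gt μ W t - (1 - t)) ^ 2 ∂lam := integral_nonneg fun t => sq_nonneg _
  linarith

theorem Gt_dense (hW : Gr W) (hA : ∫ y, ∫ z, Adf μ W y z * Adf μ W z y ∂μ ∂μ = 0)
    (heq : (∫ x, dg μ W x ^ 2 ∂μ) - ∫ x, dg μ W x ∂μ = -(1 / 6)) (a b : ℝ) (ha : 0 ≤ a)
    (hab : a < b) (hb : b ≤ 1) : ∃ s ∈ Ioo a b, Gt μ W s = 1 - s := by
  obtain ⟨hi, h⟩ := main_id hW hA
  rw [heq] at h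
  have h' : ∫ t, (Gt μ W t - (1 - t)) ^ 2 ∂lam = 0 := by rw [h]; norm_num
  rw [integral_eq_zero_iff_of_nonneg (fun t => sq_nonneg _) hi] at h'
  by_contra hcon
  push Not at hcon
  have hz : lam (Ioo a b) = 0 := by
    refine measure_mono_null ?_ h'
    intro s hs
    simp only [mem_compl_iff, mem_ofPred_eq, Pi.zero_apply]
    intro h0
    apply hcon s hs
    have := pow_eq_zero_iff (two_ne_zero) |>.1 h0
    linarith
  rw [lam, Measure.restrict_apply measurableSet_Ioo, inter_eq_self_of_subset_left, Real.volume_Ioo,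
    ENNReal.ofReal_eq_zero] at hz
  · linarith
  · intro s hs; exact ⟨by linarith [hs.1], by linarith [hs.2]⟩

theorem Gt_anti (hW : Gr W) {s t : ℝ} (hst : s ≤ t) : Gt μ W t ≤ Gt μ W s := by
  refine integral_mono (int_bdd μ (ind_meas1 hW t) 1 fun x => by split_ifs <;> simp)
    (int_bdd μ (ind_meas1 hW s) 1 fun x => by split_ifs <;> simp) fun x => ?_
  dsimp only
  split_ifs with h1 h2
  · exact le_rfl
  · exact absurd (hst.trans_lt h1) h2
  · exact zero_le_one
  · exact le_rfl

theorem Gt_eq (hW : Gr W) (hA : ∫ y, ∫ z, Adf μ W y z * Adf μ W z y ∂μ ∂μ = 0)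
    (heq : (∫ x, dg μ W x ^ 2 ∂μ) - ∫ x, dg μ W x ∂μ = -(1 / 6)) (t : ℝ) (h0 : 0 ≤ t)
    (h1 : t ≤ 1) : Gt μ W t = 1 - t := by
  have hG := Gt_mem (μ := μ) hW t
  apply le_antisymm
  · by_contra hc
    push Not at hc
    have ht : 0 < t := by
      rcases h0.lt_or_eq with h | h
      · exact h
      · linarith
    obtain ⟨s, hs, hs'⟩ := Gt_dense hW hA heq (max 0 (1 - Gt μ W t)) t (le_max_left _ _)
      (max_lt ht (by linarith)) h1
    have := Gt_anti (μ := μ) hW hs.2.le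
    have h3 := (le_max_right _ _).trans_lt hs.1
    linarith
  · by_contra hc
    push Not at hc
    have ht : t < 1 := by
      by_contra h; linarith
    obtain ⟨s, hs, hs'⟩ := Gt_dense hW hA heq t (min 1 (1 - Gt μ W t)) h0
      (lt_min ht (by linarith)) (min_le_left _ _)
    have := Gt_anti (μ := μ) hW hs.1.le
    have h3 := hs.2.trans_le (min_le_right _ _)
    linarith

theorem dg_law (hW : Gr W) (hA : ∫ y, ∫ z, Adf μ W y z * Adf μ W z y ∂μ ∂μ = 0)
    (heq : (∫ x, dg μ W x ^ 2 ∂μ) - ∫ x, dg μ W x ∂μ = -(1 / 6)) :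
    MeasurePreserving (dg μ W) μ lam := by
  have hd := dg_meas (μ := μ) hW
  refine ⟨hd, ?_⟩
  have := Measure.isProbabilityMeasure_map hd.aemeasurable (μ := μ)
  refine Measure.ext_of_Iic _ _ fun t => ?_
  rw [Measure.map_apply hd measurableSet_Iic, lam, Measure.restrict_apply measurableSet_Iic]
  rcases lt_or_ge t 0 with h0 | h0
  · have e1 : dg μ W ⁻¹' Iic t = ∅ := by
      ext x; simp only [mem_preimage, mem_Iic, mem_empty_iff_false, iff_false]
      linarith [(dg_mem (μ := μ) hW x).1]
    have e2 : Iic t ∩ I01 = ∅ := by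
      ext x; simp only [I01, mem_inter_iff, mem_Iic, mem_Icc, mem_empty_iff_false, iff_false]
      rintro ⟨_, _, _⟩; linarith
    rw [e1, e2]; simp
  rcases le_or_gt t 1 with h1 | h1
  · have e2 : Iic t ∩ I01 = Icc 0 t := by
      ext x; simp only [I01, mem_inter_iff, mem_Iic, mem_Icc]
      constructor
      · rintro ⟨_, _, _⟩; constructor <;> linarith
      · rintro ⟨_, _⟩; refine ⟨?_, ?_, ?_⟩ <;> linarith
    rw [e2, Real.volume_Icc, sub_zero]
    have hG := Gt_eq hW hA heq t h0 h1
    have e3 : Gt μ W t = μ.real (dg μ W ⁻¹' Iic t)ᶜ := by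
      rw [← integral_indicator_one (hd measurableSet_Iic).compl, Gt]
      congr 1; ext x; simp [indicator]
    rw [e3, probReal_compl_eq_one_sub (hd measurableSet_Iic)] at hG
    rw [← ofReal_measureReal]
    congr 1; linarith
  · have e1 : dg μ W ⁻¹' Iic t = univ := by
      ext x; simp only [mem_preimage, mem_Iic, mem_univ, iff_true]
      linarith [(dg_mem (μ := μ) hW x).2]
    have e2 : Iic t ∩ I01 = Icc 0 1 := by
      ext x; simp only [I01, mem_inter_iff, mem_Iic, mem_Icc]
      constructor
      · rintro ⟨_, h⟩; exact h
      · rintro ⟨_, _⟩; refine ⟨?_, ?_, ?_⟩ <;> linarith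
    rw [e1, e2]; simp

theorem lam_refl : MeasurePreserving (fun t : ℝ => 1 - t) lam lam := by
  have h := (Measure.measurePreserving_sub_left (volume : Measure ℝ) 1).restrict_preimage
    (s := I01) measurableSet_Icc
  have e : (fun t : ℝ => 1 - t) ⁻¹' I01 = I01 := by
    ext t; simp only [I01, mem_preimage, mem_Icc]
    constructor <;> rintro ⟨_, _⟩ <;> constructor <;> linarith
  rw [e] at h
  exact h

theorem eq_case (hW : Gr W) (hA : ∫ y, ∫ z, Adf μ W y z * Adf μ W z y ∂μ ∂μ = 0)
    (heq : (∫ x, dg μ W x ^ 2 ∂μ) - ∫ x, dg μ W x ∂μ = -(1 / 6)) :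
    ∃ e : Ω → ℝ, MeasurePreserving e μ lam ∧
      ∀ᵐ p ∂(μ.prod μ), W p.1 p.2 = if e p.1 + e p.2 ≤ 1 then 1 else 0 := by
  have hlaw := dg_law hW hA heq
  have hd := dg_meas (μ := μ) hW
  have hm2 := @Gr.meas2 Ω _ W hW
  refine ⟨fun x => 1 - dg μ W x, lam_refl.comp hlaw, ?_⟩
  have T := Adf_ae hW hA
  have T' := (Measure.measurePreserving_swap (μ := μ) (ν := μ)).quasiMeasurePreserving.ae T
  have H : ∀ᵐ y ∂μ, ∀ᵐ z ∂μ, ∀ᵐ x ∂μ, (dg μ W y ≤ dg μ W z → W y x * (1 - W z x) = 0) ∧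
      (dg μ W z ≤ dg μ W y → W z x * (1 - W y x) = 0) := by
    have aux : ∀ y z, Adf μ W y z = max (dg μ W y - dg μ W z) 0 →
        ∀ᵐ x ∂μ, (dg μ W y ≤ dg μ W z → W y x * (1 - W z x) = 0) := by
      intro y z hyz
      by_cases hle : dg μ W y ≤ dg μ W z
      · rw [max_eq_right (by linarith), Adf,
          integral_eq_zero_iff_of_nonneg (fun x => (Wc_mem hW x y z).1) (Wc_int hW y z)] at hyz
        filter_upwards [hyz] with x hx _
        exact hx
      · exact Filter.Eventually.of_forall fun x h => absurd h hle
    filter_upwards [Measure.ae_ae_of_ae_prod T, Measure.ae_ae_of_ae_prod T'] with y h1 h2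
    filter_upwards [h1, h2] with z h3 h4
    filter_upwards [aux y z h3, aux z y h4] with x h5 h6
    exact ⟨h5, h6⟩
  refine (Measure.ae_prod_iff_ae_ae ?_).2 ?_
  · refine measurableSet_eq_fun hW.meas (Measurable.ite (measurableSet_le ?_ measurable_const)
      measurable_const measurable_const)
    exact (measurable_const.sub (hd.comp measurable_fst)).add
      (measurable_const.sub (hd.comp measurable_snd))
  filter_upwards [H] with y hy
  rw [Measure.ae_ae_comm] at hy
  swap
  · have m1 : Measurable fun p : Ω × Ω => W y p.2 * (1 - W p.1 p.2) :=
      (hm2 (by fun_prop) (by fun_prop)).mul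
        (measurable_const.sub (hm2 (by fun_prop) (by fun_prop)))
    have m2 : Measurable fun p : Ω × Ω => W p.1 p.2 * (1 - W y p.2) :=
      (hm2 (by fun_prop) (by fun_prop)).mul
        (measurable_const.sub (hm2 (by fun_prop) (by fun_prop)))
    have m3 : Measurable fun p : Ω × Ω => dg μ W p.1 := hd.comp measurable_fst
    exact ((measurableSet_le measurable_const m3).imp (measurableSet_eq_fun m1 measurable_const)).inter
      ((measurableSet_le m3 measurable_const).imp (measurableSet_eq_fun m2 measurable_const))
  have hne : ∀ᵐ x ∂μ, dg μ W x ≠ 1 - dg μ W y := by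
    refine hlaw.quasiMeasurePreserving.ae (p := fun t => t ≠ 1 - dg μ W y) ?_
    rw [lam]
    exact ae_restrict_of_ae (Measure.ae_ne volume _)
  have hyd := dg_mem (μ := μ) hW y
  have hG := Gt_eq hW hA heq (dg μ W y) hyd.1 hyd.2
  filter_upwards [hy, hne] with x hx hxne
  have gi := int_bdd μ (ind_meas1 (μ := μ) hW (dg μ W y)) 1 fun x => by split_ifs <;> simp
  have c1 : W y x ≠ 0 → 1 - dg μ W y ≤ dg μ W x := by
    intro h
    rw [← hG]
    refine integral_mono_ae gi (W_int hW x) ?_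
    filter_upwards [hx] with z hz
    split_ifs with hlt
    · rcases mul_eq_zero.1 (hz.1 hlt.le) with h' | h'
      · exact absurd h' h
      · rw [hW.symm x z]; linarith
    · exact hW.nonneg _ _
  have c2 : W y x ≠ 1 → dg μ W x ≤ 1 - dg μ W y := by
    intro h
    rw [← hG]
    refine integral_mono_ae (W_int hW x) gi ?_
    filter_upwards [hx] with z hz
    split_ifs with hlt
    · exact hW.le_one _ _
    · rcases mul_eq_zero.1 (hz.2 (not_lt.1 hlt)) with h' | h'
      · rw [hW.symm x z, h']
      · exact absurd (by linarith) h
  split_ifs with hle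
  · by_contra hc
    exact hxne (le_antisymm (c2 hc) (by linarith))
  · by_contra hc
    linarith [c1 hc]

end Core

section Fin

open Set

/-- product measure on the cube -/
def pin (n : ℕ) : Measure (Fin n → ℝ) := Measure.pi fun _ => lam

instance (n : ℕ) : IsProbabilityMeasure (pin n) := by unfold pin; infer_instance

theorem vol_cube (n : ℕ) : (volume : Measure (Fin n → ℝ)).restrict (cube n) = pin n := by
  rw [cube, volume_pi, Measure.restrict_pi_pi]; rfl

theorem cons_meas {α : Type*} [MeasurableSpace α] {n : ℕ} {f : α → ℝ} {g : α → Fin n → ℝ}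
    (hf : Measurable f) (hg : Measurable g) :
    Measurable fun a => (Fin.cons (f a) (g a) : Fin (n + 1) → ℝ) := by
  refine measurable_pi_iff.2 fun i => ?_
  refine Fin.cases ?_ (fun j => ?_) i
  · simpa using hf
  · simpa using (measurable_pi_iff.1 hg j)

theorem pi_succ {n : ℕ} {f : (Fin (n + 1) → ℝ) → ℝ} (hf : Measurable f) (C : ℝ)
    (hC : ∀ x, |f x| ≤ C) :
    ∫ x, f x ∂(pin (n + 1)) = ∫ a, ∫ y, f (Fin.cons a y) ∂(pin n) ∂lam := by
  have h := (measurePreserving_piFinSuccAbove (fun _ : Fin (n + 1) => lam) 0).symm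
  have h2 := h.integral_comp (MeasurableEquiv.measurableEmbedding _) f
  unfold pin
  rw [← h2, integral_prod]
  · congr 1; ext a; congr 1; ext y; congr 1
    simp [MeasurableEquiv.piFinSuccAbove_symm_apply]
    try rfl
  · exact int_bdd _ (hf.comp (MeasurableEquiv.measurable _)) C fun x => hC _

theorem pi_zero (c : ℝ) : ∫ _y, c ∂(pin 0) = c := by simp

theorem pi_two {f : (Fin 2 → ℝ) → ℝ} (hf : Measurable f) (C : ℝ) (hC : ∀ x, |f x| ≤ C) :
    ∫ x, f x ∂(pin 2) = ∫ a, ∫ b, f ![a, b] ∂lam ∂lam := by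
  rw [pi_succ hf C hC]
  congr 1; ext a
  rw [pi_succ (f := fun y => f (Fin.cons a y)) (hf.comp (cons_meas measurable_const measurable_id)) C
    fun x => hC _]
  congr 1; ext b
  rw [← pi_zero (f ![a, b])]
  congr 1; ext y; congr 1
  rw [Subsingleton.elim y ![]]; rfl

theorem pi_three {f : (Fin 3 → ℝ) → ℝ} (hf : Measurable f) (C : ℝ) (hC : ∀ x, |f x| ≤ C) :
    ∫ x, f x ∂(pin 3) = ∫ a, ∫ b, ∫ c, f ![a, b, c] ∂lam ∂lam ∂lam := by
  rw [pi_succ hf C hC]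
  congr 1; ext a
  exact pi_two (f := fun y => f (Fin.cons a y)) (hf.comp (cons_meas measurable_const measurable_id)) C
    fun x => hC _

theorem pi_four {f : (Fin 4 → ℝ) → ℝ} (hf : Measurable f) (C : ℝ) (hC : ∀ x, |f x| ≤ C) :
    ∫ x, f x ∂(pin 4) = ∫ a, ∫ b, ∫ c, ∫ d, f ![a, b, c, d] ∂lam ∂lam ∂lam ∂lam := by
  rw [pi_succ hf C hC]
  congr 1; ext a
  exact pi_three (f := fun y => f (Fin.cons a y))
    (hf.comp (cons_meas measurable_const measurable_id)) C fun x => hC _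

theorem pi_pair {n : ℕ} {i j : Fin n} (hij : i ≠ j) :
    MeasurePreserving (fun x : Fin n → ℝ => (x i, x j)) (pin n) (lam.prod lam) := by
  refine ⟨by fun_prop, ?_⟩
  have h1 := ProbabilityTheory.iIndepFun_pi (μ := fun _ : Fin n => lam)
    (X := fun _ (t : ℝ) => t) (fun _ => aemeasurable_id)
  have h2 := (ProbabilityTheory.indepFun_iff_map_prod_eq_prod_map_map
    (measurable_pi_apply i).aemeasurable (measurable_pi_apply j).aemeasurable).1 (h1.indepFun hij)
  have e : ∀ k : Fin n, Measure.map (fun x : Fin n → ℝ => x k) (Measure.pi fun _ => lam) = lam :=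
    fun k => (measurePreserving_eval (fun _ : Fin n => lam) k).map_eq
  rw [e, e] at h2
  exact h2

/-- extension by zero -/
def trim (W : ℝ → ℝ → ℝ) (x y : ℝ) : ℝ := if x ∈ I01 ∧ y ∈ I01 then W x y else 0

theorem trim_eq (W : ℝ → ℝ → ℝ) {x y : ℝ} (hx : x ∈ I01) (hy : y ∈ I01) : trim W x y = W x y := by
  simp [trim, hx, hy]

theorem trim_gr {W : ℝ → ℝ → ℝ} (hW : memW0 W) : Gr (trim W) := by
  obtain ⟨hm, hs, hb⟩ := hW
  have hI : MeasurableSet I01 := measurableSet_Icc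
  refine ⟨?_, ?_, ?_, ?_⟩
  · exact Measurable.ite ((measurable_fst hI).inter (measurable_snd hI)) hm measurable_const
  · intro x y
    unfold trim
    by_cases hx : x ∈ I01 <;> by_cases hy : y ∈ I01 <;> simp [hx, hy]
    exact hs x hx y hy
  · intro x y; unfold trim
    split_ifs with h
    · exact (hb x h.1 y h.2).1
    · exact le_rfl
  · intro x y; unfold trim
    split_ifs with h
    · exact (hb x h.1 y h.2).2
    · exact zero_le_one

theorem meas_cube (n : ℕ) : MeasurableSet (cube n) :=
  MeasurableSet.univ_pi fun _ => measurableSet_Icc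

theorem hom_trim {n : ℕ} (F : SimpleGraph (Fin n)) (W : ℝ → ℝ → ℝ) :
    homDensity F W = homDensity F (trim W) := by
  unfold homDensity
  refine setIntegral_congr_fun (meas_cube n) fun x hx => ?_
  refine Finset.prod_congr rfl fun p _ => ?_
  rw [trim_eq W (hx _ trivial) (hx _ trivial)]

theorem hom_pin {n : ℕ} (F : SimpleGraph (Fin n)) (W : ℝ → ℝ → ℝ) :
    homDensity F W = ∫ x, ∏ p ∈ Finset.univ.filter
      (fun p : Fin n × Fin n => p.1 < p.2 ∧ F.Adj p.1 p.2), W (x p.1) (x p.2) ∂(pin n) := by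
  rw [homDensity, vol_cube]

theorem hom_fin {n : ℕ} (F : SimpleGraph (Fin n)) (W : ℝ → ℝ → ℝ) (S : Finset (Fin n × Fin n))
    (hS : ∀ p, p ∈ S ↔ p.1 < p.2 ∧ F.Adj p.1 p.2) :
    homDensity F W = ∫ x, ∏ p ∈ S, W (x p.1) (x p.2) ∂(pin n) := by
  rw [hom_pin]
  congr 1; ext x
  refine Finset.prod_congr ?_ fun _ _ => rfl
  ext p; rw [hS, Finset.mem_filter]; simp

theorem hom_two {U : ℝ → ℝ → ℝ} (hU : Gr U) :
    homDensity (⊤ : SimpleGraph (Fin 2)) U = ∫ x, dg lam U x ∂lam := by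
  rw [hom_fin _ _ {(0, 1)} (by
    rintro ⟨a, b⟩; fin_cases a <;> fin_cases b <;> simp)]
  simp only [Finset.prod_singleton]
  rw [pi_two (hU.meas2 (by fun_prop) (by fun_prop)) 1
    fun x => abs_le.2 ⟨by linarith [hU.nonneg (x 0) (x 1)], hU.le_one _ _⟩]
  rfl

/-- path with three vertices, centre 0 -/
def star3 : SimpleGraph (Fin 3) where
  Adj a b := (a = 0 ∧ b ≠ 0) ∨ (b = 0 ∧ a ≠ 0)
  symm := ⟨fun a b h => h.symm⟩
  loopless := ⟨fun a h => by rcases h with h | h <;> exact h.2 h.1⟩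

theorem hom_three {U : ℝ → ℝ → ℝ} (hU : Gr U) :
    homDensity star3 U = ∫ x, dg lam U x ^ 2 ∂lam := by
  rw [hom_fin _ _ {(0, 1), (0, 2)} (by
    rintro ⟨a, b⟩; fin_cases a <;> fin_cases b <;> simp [star3])]
  have e2 : ∀ x : Fin 3 → ℝ, ∏ p ∈ ({(0, 1), (0, 2)} : Finset (Fin 3 × Fin 3)), U (x p.1) (x p.2)
      = U (x 0) (x 1) * U (x 0) (x 2) := fun x => Finset.prod_pair (by decide)
  simp_rw [e2]
  rw [pi_three (f := fun x => U (x 0) (x 1) * U (x 0) (x 2)) ((hU.meas2 (by fun_prop) (by fun_prop)).mul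
    (hU.meas2 (by fun_prop) (by fun_prop))) 1
    fun x => abs_le.2 ⟨by linarith [mul_nonneg (hU.nonneg (x 0) (x 1)) (hU.nonneg (x 0) (x 2))],
      mul_le_one₀ (hU.le_one _ _) (hU.nonneg _ _) (hU.le_one _ _)⟩]
  congr 1; ext a
  show ∫ b, ∫ c, U a b * U a c ∂lam ∂lam = _
  simp_rw [integral_const_mul]
  rw [integral_mul_const, dg, sq]

theorem four_cond {U : ℝ → ℝ → ℝ} (hU : Gr U)
    (h : (∫ x, U (x 0) (x 1) * (1 - U (x 1) (x 2)) * U (x 2) (x 3) * (1 - U (x 3) (x 0))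
      ∂(pin 4)) = 0) :
    ∫ y, ∫ z, Adf lam U y z * Adf lam U z y ∂lam ∂lam = 0 := by
  have key : ∀ a b c d, |U a b * (1 - U b c) * U c d * (1 - U d a)| ≤ 1 := by
    intro a b c d
    have h1 := Wc_mem hU b a c
    have h2 := Wc_mem hU d c a
    rw [hU.symm b c, hU.symm d a, mul_assoc, abs_mul, abs_of_nonneg h1.1, abs_of_nonneg h2.1]
    exact mul_le_one₀ h1.2 h2.1 h2.2
  have hm : ∀ i j : Fin 4, Measurable fun x : Fin 4 → ℝ => U (x i) (x j) := fun i j =>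
    hU.meas2 (by fun_prop) (by fun_prop)
  rw [pi_four (f := fun x =>
    U (x 0) (x 1) * (1 - U (x 1) (x 2)) * U (x 2) (x 3) * (1 - U (x 3) (x 0))) ((((hm 0 1).mul (measurable_const.sub (hm 1 2))).mul (hm 2 3)).mul
    (measurable_const.sub (hm 3 0))) 1 fun x => key _ _ _ _] at h
  rw [← h]
  congr 1; ext a
  show _ = ∫ b, ∫ c, ∫ d, U a b * (1 - U b c) * U c d * (1 - U d a) ∂lam ∂lam ∂lam
  have e1 : ∀ b c, ∫ d, U a b * (1 - U b c) * U c d * (1 - U d a) ∂lam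
      = (U a b * (1 - U c b)) * Adf lam U c a := by
    intro b c
    rw [Adf, ← integral_const_mul]
    congr 1; ext d; rw [hU.symm b c, hU.symm d a]; ring
  simp_rw [e1]
  rw [integral_integral_swap (f := fun b c => U a b * (1 - U c b) * Adf lam U c a)]
  · simp_rw [integral_mul_const]; rfl
  · refine int_bdd _ ?_ 1 ?_
    · exact ((hU.meas2 (by fun_prop) (by fun_prop)).mul
        (measurable_const.sub (hU.meas2 (by fun_prop) (by fun_prop)))).mul
        ((Adf_meas hU).comp (by fun_prop : Measurable fun p : ℝ × ℝ => (p.2, a)))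
    · rintro ⟨b, c⟩
      have h1 := Wc_mem hU b a c
      have h2 := Adf_mem (μ := lam) hU c a
      simp only [Function.uncurry]
      rw [abs_mul, abs_of_nonneg h1.1, abs_of_nonneg h2.1]
      exact mul_le_one₀ h1.2 h2.1 h2.2

/-- the half graphon -/
def halfW (x y : ℝ) : ℝ := if x + y ≤ 1 then (1 : ℝ) else 0

theorem halfW_mem : memW0 halfW := by
  refine ⟨?_, ?_, ?_⟩
  · exact Measurable.ite (measurableSet_le (by fun_prop) measurable_const) measurable_const
      measurable_const
  · intro x _ y _; simp [halfW, add_comm]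
  · intro x _ y _; unfold halfW; split_ifs <;> simp

theorem dg_trim (W : ℝ → ℝ → ℝ) {x : ℝ} (hx : x ∈ I01) :
    dg lam (trim W) x = ∫ y in I01, W x y := by
  rw [dg, lam]
  exact setIntegral_congr_fun measurableSet_Icc fun y hy => trim_eq W hx hy

theorem dg_half {x : ℝ} (hx : x ∈ I01) : dg lam (trim halfW) x = 1 - x := by
  rw [dg_trim _ hx]
  have : halfW x = (Iic (1 - x)).indicator 1 := by
    ext y; simp [halfW, indicator, le_sub_iff_add_le, add_comm]
  rw [this, integral_indicator_one measurableSet_Iic, measureReal_restrict_apply measurableSet_Iic]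
  simp only [I01, mem_Icc] at hx
  have : Iic (1 - x) ∩ I01 = Icc 0 (1 - x) := by
    ext t; simp only [I01, mem_inter_iff, mem_Iic, mem_Icc]
    constructor
    · rintro ⟨h, h', _⟩; exact ⟨h', h⟩
    · rintro ⟨h, h'⟩; exact ⟨h', h, by linarith⟩
  rw [this, Real.volume_real_Icc_of_le (by linarith)]; simp

theorem half_val : (∫ x, dg lam (trim halfW) x ^ 2 ∂lam) - ∫ x, dg lam (trim halfW) x ∂lam
    = -(1 / 6) := by
  have h1 : ∫ x, dg lam (trim halfW) x ^ 2 ∂lam = ∫ x, (1 - x) ^ 2 ∂lam :=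
    setIntegral_congr_fun measurableSet_Icc fun x hx => by simp only [dg_half hx]
  have h2 : ∫ x, dg lam (trim halfW) x ∂lam = ∫ x, (1 - x) ∂lam :=
    setIntegral_congr_fun measurableSet_Icc fun x hx => by simp only [dg_half hx]
  rw [h1, h2, lam_int, lam_int, intervalIntegral.integral_comp_sub_left (fun t => t ^ 2),
    intervalIntegral.integral_comp_sub_left (fun t => t)]
  norm_num

theorem weak_of {U : ℝ → ℝ → ℝ} {e : ℝ → ℝ} (he : MeasurePreserving e lam lam)
    (hU : ∀ᵐ p ∂(lam.prod lam), U p.1 p.2 = halfW (e p.1) (e p.2)) {n : ℕ}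
    (F : SimpleGraph (Fin n)) : homDensity F U = homDensity F halfW := by
  rw [hom_pin, hom_pin]
  have hp : MeasurePreserving (fun (x : Fin n → ℝ) i => e (x i)) (pin n) (pin n) :=
    measurePreserving_pi _ _ fun _ => he
  have hm : Measurable fun x : Fin n → ℝ => ∏ p ∈ Finset.univ.filter
      (fun p : Fin n × Fin n => p.1 < p.2 ∧ F.Adj p.1 p.2), halfW (x p.1) (x p.2) :=
    Finset.measurable_prod _ fun p _ => halfW_mem.1.comp
      (by fun_prop : Measurable fun x : Fin n → ℝ => (x p.1, x p.2))
  conv_rhs => rw [← hp.map_eq]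
  rw [integral_map hp.measurable.aemeasurable hm.aestronglyMeasurable]
  apply integral_congr_ae
  have hall : ∀ᵐ x ∂(pin n), ∀ p : Fin n × Fin n, p.1 < p.2 →
      U (x p.1) (x p.2) = halfW (e (x p.1)) (e (x p.2)) := by
    rw [ae_all_iff]
    intro p
    by_cases hlt : p.1 < p.2
    · filter_upwards [(pi_pair hlt.ne).quasiMeasurePreserving.ae hU] with x hx _
      exact hx
    · exact Filter.Eventually.of_forall fun x h => absurd h hlt
  filter_upwards [hall] with x hx
  exact Finset.prod_congr rfl fun p hp => hx p (Finset.mem_filter.1 hp).2.1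

end Fin

/-- if `W ∈ 𝒲₀` satisfies the displayed 4-cycle-type vanishing condition,
then `t(P₃,W) − t(K₂,W) ≥ −1/6`, with equality iff `W` is weakly isomorphic to the
half-graphon. -/
theorem statement9 (W : ℝ → ℝ → ℝ) (hW : memW0 W)
    (h : (∫ x in cube 4,
      W (x 0) (x 1) * (1 - W (x 1) (x 2)) * W (x 2) (x 3) * (1 - W (x 3) (x 0))) = 0) :
    -(1/6 : ℝ) ≤ (∫ x in I01, (∫ y in I01, W x y) ^ 2) - ∫ q in I01 ×ˢ I01, W q.1 q.2 ∧
    ((∫ x in I01, (∫ y in I01, W x y) ^ 2) - (∫ q in I01 ×ˢ I01, W q.1 q.2) = -(1/6 : ℝ) ↔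
      WeaklyIsomorphic W (fun x y => if x + y ≤ 1 then (1 : ℝ) else 0)) := by
  have hU := trim_gr hW
  have hA := four_cond hU (by
    rw [← h, ← vol_cube]
    refine setIntegral_congr_fun (meas_cube 4) fun x hx => ?_
    have hx' : ∀ i, x i ∈ I01 := fun i => hx i trivial
    simp only [trim_eq W (hx' _) (hx' _)])
  have e1 : (∫ x in I01, (∫ y in I01, W x y) ^ 2) = ∫ x, dg lam (trim W) x ^ 2 ∂lam :=
    setIntegral_congr_fun measurableSet_Icc fun x hx => by simp only [dg_trim W hx]
  have e2 : (∫ q in I01 ×ˢ I01, W q.1 q.2) = ∫ x, dg lam (trim W) x ∂lam := by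
    have hI : Integrable (Function.uncurry (trim W)) (lam.prod lam) :=
      int_bdd _ hU.meas 1 fun p => abs_le.2 ⟨by
        have := hU.nonneg p.1 p.2
        simp only [Function.uncurry]; linarith, hU.le_one p.1 p.2⟩
    have := integral_prod _ hI
    refine Eq.trans ?_ this
    rw [lam, Measure.prod_restrict, ← Measure.volume_eq_prod]
    exact setIntegral_congr_fun (measurableSet_Icc.prod measurableSet_Icc)
      fun q hq => (trim_eq W hq.1 hq.2).symm
  rw [e1, e2]
  refine ⟨main_ineq hU hA, fun heq => ?_, fun hw => ?_⟩
  · obtain ⟨e, he, hae⟩ := eq_case hU hA heq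
    intro n F
    rw [hom_trim]
    exact weak_of he hae F
  · rw [← hom_three hU, ← hom_two hU, ← hom_trim, ← hom_trim, hw, hw]
    change homDensity star3 halfW - homDensity ⊤ halfW = _
    rw [hom_trim star3, hom_trim ⊤]
    exact (congrArg₂ _ (hom_three (trim_gr halfW_mem)) (hom_two (trim_gr halfW_mem))).trans half_val
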